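/- Let k=(k_1,…,k_r) be a composition and let α∈ℂ∖ℕ. Then Σ_{l⪰k} ζ((←l^∨)_+; 1−α) = ζ⋆((←k^∨)_+; 1−α), where the sum is over all compositions l with l⪰k. -/

import Mathlib

open scoped BigOperators
open MeasureTheory

/-- Multiple polylogarithm `Li_k(z) = Σ_{n₁>⋯>n_r>0} z^{n₁}/(n₁^{k₁}⋯n_r^{k_r})`. -/
noncomputable def MPL (k : List ℕ) (z : ℝ) : ℝ :=
  if h : 0 < k.length then
    ∑' n : {n : Fin k.length → ℕ // StrictAnti n ∧ ∀ i, 0 < n i},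
      z ^ (n.1 ⟨0, h⟩) / ∏ i, (n.1 i : ℝ) ^ k.get i
  else 1

/-- Level-two multiple polylogarithm
`A(k;x) = 2^r Σ_{n₁>⋯>n_r>0, n_j ≡ r+1-j (mod 2)} x^{n₁}/(n₁^{k₁}⋯n_r^{k_r})`. -/
noncomputable def AFn (k : List ℕ) (x : ℝ) : ℝ :=
  if h : 0 < k.length then
    2 ^ k.length *
      ∑' n : {n : Fin k.length → ℕ //
          StrictAnti n ∧ (∀ i, 0 < n i) ∧ ∀ i, n i % 2 = (k.length - i.val) % 2},
        x ^ (n.1 ⟨0, h⟩) / ∏ i, (n.1 i : ℝ) ^ k.get i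
  else 1

/-- Multiple zeta value `ζ(k) = Σ_{n₁>⋯>n_r>0} ∏ 1/n_i^{k_i}`. -/
noncomputable def MZV (k : List ℕ) : ℝ :=
  ∑' n : {n : Fin k.length → ℕ // StrictAnti n ∧ ∀ i, 0 < n i},
    ∏ i, 1 / (n.1 i : ℝ) ^ k.get i

/-- Multiple zeta star value `ζ⋆(k) = Σ_{n₁≥⋯≥n_r>0} ∏ 1/n_i^{k_i}`. -/
noncomputable def MZSV (k : List ℕ) : ℝ :=
  ∑' n : {n : Fin k.length → ℕ // Antitone n ∧ ∀ i, 0 < n i},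
    ∏ i, 1 / (n.1 i : ℝ) ^ k.get i

/-- Multiple T-value `T(k) = 2^r Σ_{n₁>⋯>n_r>0, n_j ≡ r+1-j (mod 2)} ∏ 1/n_i^{k_i}`. -/
noncomputable def MTV (k : List ℕ) : ℝ :=
  2 ^ k.length *
    ∑' n : {n : Fin k.length → ℕ //
        StrictAnti n ∧ (∀ i, 0 < n i) ∧ ∀ i, n i % 2 = (k.length - i.val) % 2},
      ∏ i, 1 / (n.1 i : ℝ) ^ k.get i

/-- Hurwitz-type multiple zeta value `ζ(k;α) = Σ_{n₁>⋯>n_r>0} ∏ (n_i+α-1)^{-k_i}`. -/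
noncomputable def HMZV (k : List ℕ) (α : ℂ) : ℂ :=
  ∑' n : {n : Fin k.length → ℕ // StrictAnti n ∧ ∀ i, 0 < n i},
    ∏ i, ((n.1 i : ℂ) + α - 1) ^ (-(k.get i : ℤ))

/-- Hurwitz-type multiple zeta star value `ζ⋆(k;α) = Σ_{n₁≥⋯≥n_r>0} ∏ (n_i+α-1)^{-k_i}`. -/
noncomputable def HMZSV (k : List ℕ) (α : ℂ) : ℂ :=
  ∑' n : {n : Fin k.length → ℕ // Antitone n ∧ ∀ i, 0 < n i},
    ∏ i, ((n.1 i : ℂ) + α - 1) ^ (-(k.get i : ℤ))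

/-- Hurwitz-type multiple T-value
`T(k;α) = Σ_{m₁>⋯>m_r>0} 2^r ∏_i (2m_i - r - 2 + i + α)^{-k_i}` (1-indexed `i`). -/
noncomputable def HMTV (k : List ℕ) (α : ℂ) : ℂ :=
  ∑' n : {n : Fin k.length → ℕ // StrictAnti n ∧ ∀ i, 0 < n i},
    2 ^ k.length *
      ∏ i, (2 * (n.1 i : ℂ) - (k.length : ℂ) - 1 + (i.val : ℂ) + α) ^ (-(k.get i : ℤ))

/-- The boolean word (sequence of bits between consecutive units) of a composition. -/
def toWord : List ℕ → List Bool
  | [] => []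
  | [a] => List.replicate (a - 1) false
  | a :: b :: rest => List.replicate (a - 1) false ++ true :: toWord (b :: rest)

/-- The composition corresponding to a boolean word. -/
def fromWord : List Bool → List ℕ
  | [] => [1]
  | false :: w =>
    match fromWord w with
    | [] => [1]
    | a :: t => (a + 1) :: t
  | true :: w => 1 :: fromWord w

/-- Hoffman dual of a composition: swap commas and plus signs in
`k = (1+⋯+1, …, 1+⋯+1)`. -/
def HDual (k : List ℕ) : List ℕ := fromWord ((toWord k).map fun b => !b)

/-- `k₊ = (k₁+1, k₂, …, k_r)`. -/
def plusOne : List ℕ → List ℕ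
  | [] => []
  | a :: t => (a + 1) :: t

/-- `Refines l k` means the composition `k` can be obtained from `l`
by combining some consecutive parts of `l`, i.e. `l ⪰ k`. -/
inductive Refines : List ℕ → List ℕ → Prop
  | nil : Refines [] []
  | cons (b l k : List ℕ) : b ≠ [] → Refines l k → Refines (b ++ l) (b.sum :: k)

/-- Arakawa–Kaneko zeta function `ξ(s;k) = (1/Γ(s)) ∫_0^∞ t^{s-1}/(e^t-1) Li_k(1-e^{-t}) dt`. -/
noncomputable def xiAK (s : ℂ) (k : List ℕ) : ℂ :=
  (1 / Complex.Gamma s) *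
    ∫ t in Set.Ioi (0 : ℝ),
      (t : ℂ) ^ (s - 1) / ((Real.exp t : ℂ) - 1) * (MPL k (1 - Real.exp (-t)) : ℂ)

/-- Kaneko–Tsumura η-function `η(s;k) = (1/Γ(s)) ∫_0^∞ t^{s-1}/(1-e^t) Li_k(1-e^{t}) dt`. -/
noncomputable def etaKT (s : ℂ) (k : List ℕ) : ℂ :=
  (1 / Complex.Gamma s) *
    ∫ t in Set.Ioi (0 : ℝ),
      (t : ℂ) ^ (s - 1) / (1 - (Real.exp t : ℂ)) * (MPL k (1 - Real.exp t) : ℂ)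

/-- Kaneko–Tsumura ψ-function `ψ(s;k) = (1/Γ(s)) ∫_0^∞ t^{s-1} A(k; tanh(t/2))/sinh(t) dt`. -/
noncomputable def psiKT (s : ℂ) (k : List ℕ) : ℂ :=
  (1 / Complex.Gamma s) *
    ∫ t in Set.Ioi (0 : ℝ),
      (t : ℂ) ^ (s - 1) * ((AFn k (Real.tanh (t / 2)) / Real.sinh t : ℝ) : ℂ)

/-- Riemann zeta value `ζ(a) = Σ_{n>0} 1/n^a`. -/
noncomputable def zeta1 (a : ℕ) : ℝ := ∑' n : {n : ℕ // 0 < n}, 1 / (n.1 : ℝ) ^ a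

/-- Double zeta value `ζ(a,b) = Σ_{n₁>n₂>0} 1/(n₁^a n₂^b)`. -/
noncomputable def zeta2 (a b : ℕ) : ℝ :=
  ∑' p : {p : ℕ × ℕ // p.2 < p.1 ∧ 0 < p.2}, 1 / ((p.1.1 : ℝ) ^ a * (p.1.2 : ℝ) ^ b)

/-- Single T-value `T(a) = 2 Σ_{n>0 odd} 1/n^a`. -/
noncomputable def T1 (a : ℕ) : ℝ := 2 * ∑' n : {n : ℕ // 0 < n ∧ n % 2 = 1}, 1 / (n.1 : ℝ) ^ a

/-- Double T-value `T(a,b) = 4 Σ_{n₁>n₂>0, n₁ even, n₂ odd} 1/(n₁^a n₂^b)`. -/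
noncomputable def T2 (a b : ℕ) : ℝ :=
  4 * ∑' p : {p : ℕ × ℕ // p.2 < p.1 ∧ 0 < p.2 ∧ p.1 % 2 = 0 ∧ p.2 % 2 = 1},
    1 / ((p.1.1 : ℝ) ^ a * (p.1.2 : ℝ) ^ b)



namespace S13

/-! ### Words and refinements -/

theorem Refines.append {l₁ k₁ l₂ k₂ : List ℕ} (h₁ : Refines l₁ k₁) (h₂ : Refines l₂ k₂) :
    Refines (l₁ ++ l₂) (k₁ ++ k₂) := by
  induction h₁ with
  | nil => simpa using h₂
  | cons b l k hb _ ih =>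
    rw [List.append_assoc, List.cons_append]
    exact Refines.cons b _ _ hb ih

theorem Refines.rev {l k : List ℕ} (h : Refines l k) : Refines l.reverse k.reverse := by
  induction h with
  | nil => exact Refines.nil
  | cons b l k hb _ ih =>
    rw [List.reverse_append, List.reverse_cons]
    refine Refines.append ih ?_
    have := Refines.cons b.reverse [] [] (by simpa using hb) Refines.nil
    simpa using this

theorem fromWord_ne (w : List Bool) : fromWord w ≠ [] := by
  cases w with
  | nil => simp [fromWord]
  | cons b w =>
    cases b
    · simp only [fromWord]; split <;> simp
    · simp [fromWord]

theorem fromWord_pos (w : List Bool) : ∀ a ∈ fromWord w, 0 < a := by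
  induction w with
  | nil => simp [fromWord]
  | cons b w ih =>
    cases b
    · simp only [fromWord]
      split
      · simp
      · rename_i a t h
        rw [h] at ih
        intro c hc
        simp only [List.mem_cons] at hc
        rcases hc with rfl | hc
        · omega
        · exact ih c (by simp [hc])
    · intro a ha
      simp only [fromWord, List.mem_cons] at ha
      rcases ha with rfl | ha
      · omega
      · exact ih a ha

theorem toWord_succ (a : ℕ) (t : List ℕ) (ha : 0 < a) :
    toWord ((a + 1) :: t) = false :: toWord (a :: t) := by
  obtain ⟨a, rfl⟩ : ∃ b, a = b + 1 := ⟨a - 1, by omega⟩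
  cases t <;> simp [toWord, List.replicate_succ]

theorem toWord_fromWord (w : List Bool) : toWord (fromWord w) = w := by
  induction w with
  | nil => simp [fromWord, toWord]
  | cons b w ih =>
    cases b
    · have hp := fromWord_pos w
      have hn := fromWord_ne w
      cases h : fromWord w with
      | nil => exact absurd h hn
      | cons a t =>
        rw [h] at ih hp
        simp only [fromWord, h]
        rw [toWord_succ a t (hp a (by simp)), ih]
    · have hn := fromWord_ne w
      cases h : fromWord w with
      | nil => exact absurd h hn
      | cons a t =>
        rw [h] at ih
        simp [fromWord, h, toWord, ih]

theorem fromWord_toWord_cons (t : List ℕ) : ∀ a, 0 < a → (∀ c ∈ t, 0 < c) →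
    fromWord (toWord (a :: t)) = a :: t := by
  induction t with
  | nil =>
    intro a ha _
    induction a, ha using Nat.le_induction with
    | base => simp [toWord, fromWord]
    | succ n hn ih =>
      rw [toWord_succ _ _ hn]
      simp [fromWord, ih]
  | cons b t iht =>
    intro a ha ht
    induction a, ha using Nat.le_induction with
    | base =>
      simp only [toWord, fromWord, List.replicate_zero, Nat.succ_eq_add_one, zero_add,
        Nat.sub_self, List.nil_append]
      rw [iht b (ht b (by simp)) (fun c hc => ht c (by simp [hc]))]
    | succ n hn ih =>
      rw [toWord_succ _ _ hn]
      simp [fromWord, ih]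

theorem fromWord_toWord (l : List ℕ) (hl : l ≠ []) (hp : ∀ c ∈ l, 0 < c) :
    fromWord (toWord l) = l := by
  cases l with
  | nil => exact absurd rfl hl
  | cons a t => exact fromWord_toWord_cons t a (hp a (by simp)) (fun c hc => hp c (by simp [hc]))

theorem toWord_append (b l : List ℕ) (hb : b ≠ []) (hl : l ≠ []) :
    toWord (b ++ l) = toWord b ++ true :: toWord l := by
  induction b with
  | nil => exact absurd rfl hb
  | cons a t ih =>
    cases t with
    | nil =>
      cases l with
      | nil => exact absurd rfl hl
      | cons c l => simp [toWord]
    | cons c t =>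
      have := ih (by simp)
      simp only [List.cons_append] at this ⊢
      simp [toWord, this]

theorem toWord_length (b : List ℕ) (hb : b ≠ []) (hp : ∀ c ∈ b, 0 < c) :
    (toWord b).length = b.sum - 1 ∧ 0 < b.sum := by
  induction b with
  | nil => exact absurd rfl hb
  | cons a t ih =>
    have ha := hp a (by simp)
    cases t with
    | nil => simp [toWord, ha]
    | cons c t =>
      have := ih (by simp) (fun c hc => hp c (by simp [hc]))
      simp only [toWord, List.length_append, List.length_replicate, List.length_cons, this.1,
        List.sum_cons] at this ⊢
      omega

def WLe (w w' : List Bool) : Prop := List.Forall₂ (fun a b : Bool => a ≤ b) w w'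

theorem refines_nil_iff {l k : List ℕ} (h : Refines l k) : l = [] ↔ k = [] := by
  cases h with
  | nil => simp
  | cons b l k hb _ => simp [hb]

theorem wle_replicate (w : List Bool) : WLe (List.replicate w.length false) w := by
  induction w with
  | nil => exact List.Forall₂.nil
  | cons b w ih =>
    rw [List.length_cons, List.replicate_succ]
    exact List.Forall₂.cons (Bool.false_le b) ih

theorem WLe.append {a b c d : List Bool} (h : WLe a b) (h' : WLe c d) : WLe (a ++ c) (b ++ d) := by
  induction h with
  | nil => simpa using h'
  | cons h _ ih => exact List.Forall₂.cons h ih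

theorem wle_of_refines {l k : List ℕ} (h : Refines l k) (hp : ∀ c ∈ l, 0 < c) :
    WLe (toWord k) (toWord l) := by
  induction h with
  | nil => exact List.Forall₂.nil
  | cons b l k hb h ih =>
    have hpb : ∀ c ∈ b, 0 < c := fun c hc => hp c (by simp [hc])
    have hpl : ∀ c ∈ l, 0 < c := fun c hc => hp c (by simp [hc])
    have hlen := toWord_length b hb hpb
    have h1 : WLe (toWord [b.sum]) (toWord b) := by
      have := wle_replicate (toWord b)
      rw [hlen.1] at this
      simpa [toWord] using this
    by_cases hl : l = []
    · have hk := (refines_nil_iff h).1 hl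
      subst hl; subst hk
      simpa using h1
    · have hk : k ≠ [] := fun hk => hl ((refines_nil_iff h).2 hk)
      rw [toWord_append b l hb hl, ← List.singleton_append, toWord_append _ k (by simp) hk]
      exact WLe.append h1 (List.Forall₂.cons le_rfl (ih hpl))

theorem refines_of_wle {w w' : List Bool} (h : WLe w w') :
    Refines (fromWord w') (fromWord w) := by
  induction h with
  | nil => exact Refines.cons [1] [] [] (by simp) Refines.nil
  | @cons a b w w' hab _ ih =>
    have hn := fromWord_ne w
    have hn' := fromWord_ne w'
    cases a
    · cases hw : fromWord w with
      | nil => exact absurd hw hn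
      | cons c t =>
        cases hw' : fromWord w' with
        | nil => exact absurd hw' hn'
        | cons c' t' =>
          rw [hw, hw'] at ih
          generalize hL : c' :: t' = L at ih
          cases ih with
          | cons b₀ l k hb₀ h =>
            cases b
            · cases b₀ with
              | nil => exact absurd rfl hb₀
              | cons d b₁ =>
                simp only [List.cons_append, List.cons.injEq] at hL
                obtain ⟨rfl, rfl⟩ := hL
                have := Refines.cons ((c' + 1) :: b₁) l t (by simp) h
                simp only [fromWord, hw, hw']
                convert this using 2
                · rfl
                · simp only [List.sum_cons]; omega
            · have := Refines.cons (1 :: b₀) l t (by simp) h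
              simp only [fromWord, hw, hw', hL]
              convert this using 2
              · rfl
              · simp only [List.sum_cons]; omega
    · cases b
      · exact absurd hab (by decide)
      · exact Refines.cons [1] _ _ (by simp) ih

/-! ### Down sets of words -/

def down : List Bool → List (List Bool)
  | [] => [[]]
  | false :: w => (down w).map (List.cons false)
  | true :: w => (down w).map (List.cons true) ++ (down w).map (List.cons false)

theorem mem_down (w v : List Bool) : v ∈ down w ↔ WLe v w := by
  induction w generalizing v with
  | nil => simp [down, WLe]
  | cons b w ih =>
    cases v with
    | nil => cases b <;> simp [down, WLe]
    | cons a v =>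
      have := ih v
      cases a <;> cases b <;> simp [down, WLe, ih] 

theorem nodup_down (w : List Bool) : (down w).Nodup := by
  have hi : ∀ b : Bool, Function.Injective (List.cons b) := fun b x y h => by simpa using h
  induction w with
  | nil => simp [down]
  | cons b w ih =>
    cases b
    · exact ih.map (hi _)
    · refine List.Nodup.append (ih.map (hi _)) (ih.map (hi _)) ?_
      intro x hx hy
      simp only [List.mem_map] at hx hy
      obtain ⟨_, _, rfl⟩ := hx
      obtain ⟨_, _, h⟩ := hy
      simp at h

theorem wle_not {w v : List Bool} (h : WLe w v) :
    WLe (v.map fun b => !b) (w.map fun b => !b) := by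
  induction h with
  | nil => exact List.Forall₂.nil
  | cons h _ ih => exact List.Forall₂.cons (by revert h; rename_i a b _ _ _; revert a b; decide) ih

theorem not_not_word (w : List Bool) : (w.map fun b => !b).map (fun b => !b) = w := by
  induction w with
  | nil => rfl
  | cons b w ih => rw [List.map_cons, List.map_cons, ih, Bool.not_not]

noncomputable def wordEquiv (k : List ℕ) (hk : k ≠ []) (hkpos : ∀ a ∈ k, 0 < a) :
    {l : List ℕ // (∀ a ∈ l, 0 < a) ∧ Refines l k} ≃
      {v : List Bool // v ∈ (down ((toWord k.reverse).map fun b => !b)).toFinset} where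
  toFun l := ⟨(toWord l.1.reverse).map fun b => !b, by
    rw [List.mem_toFinset, mem_down]
    exact wle_not (wle_of_refines (Refines.rev l.2.2) (by simpa using l.2.1))⟩
  invFun v := ⟨(fromWord (v.1.map fun b => !b)).reverse, by
    simpa using fromWord_pos _, by
    have := v.2
    rw [List.mem_toFinset, mem_down] at this
    have := wle_not this
    rw [not_not_word] at this
    have := Refines.rev (refines_of_wle this)
    rwa [fromWord_toWord _ (by simpa using hk) (by simpa using hkpos), List.reverse_reverse] at this⟩
  left_inv l := by
    apply Subtype.ext
    have hl : l.1 ≠ [] := fun h => hk ((refines_nil_iff l.2.2).1 h)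
    simp only
    rw [not_not_word, fromWord_toWord _ (by simpa using hl) (by simpa using l.2.1),
      List.reverse_reverse]
  right_inv v := by
    apply Subtype.ext
    simp only
    rw [List.reverse_reverse, toWord_fromWord, not_not_word]

theorem tsum_words (k : List ℕ) (hk : k ≠ []) (hkpos : ∀ a ∈ k, 0 < a) (g : List ℕ → ℂ) :
    (∑' l : {l : List ℕ // (∀ a ∈ l, 0 < a) ∧ Refines l k}, g (HDual l.1.reverse)) =
      ((down ((toWord k.reverse).map fun b => !b)).map fun v => g (fromWord v)).sum := by
  rw [← List.sum_toFinset _ (nodup_down _), ← Finset.tsum_subtype,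
    ← (wordEquiv k hk hkpos).tsum_eq]
  rfl

/-! ### Finite truncated sums -/

/-- truncated nested sums; `e = 0` strict, `e = 1` star -/
noncomputable def F (x : ℕ → ℂ) (e : ℕ) : List ℕ → ℕ → ℂ
  | [], _ => 1
  | k :: t, N => ∑ m ∈ Finset.Ioo 0 (N + e), x m ^ (-(k : ℤ)) * F x e t m

def addHead (c : ℕ) : List ℕ → List ℕ
  | [] => []
  | a :: t => (a + c) :: t

theorem star_split (x : ℕ → ℂ) (hx : ∀ m, 0 < m → x m ≠ 0) (a : ℕ) (l : List ℕ) (hl : l ≠ [])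
    (N : ℕ) :
    F x 1 (a :: l) N = (∑ m ∈ Finset.Ioo 0 (N + 1), x m ^ (-(a : ℤ)) * F x 1 l (m - 1))
      + F x 1 (addHead a l) N := by
  cases l with
  | nil => exact absurd rfl hl
  | cons b t =>
    simp only [F, addHead]
    rw [← Finset.sum_add_distrib]
    refine Finset.sum_congr rfl fun m hm => ?_
    have hm0 : 0 < m := (Finset.mem_Ioo.1 hm).1
    obtain ⟨m, rfl⟩ : ∃ j, m = j + 1 := ⟨m - 1, by omega⟩
    have : Finset.Ioo 0 (m + 1 + 1) = insert (m + 1) (Finset.Ioo 0 (m + 1)) := by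
      ext j; simp only [Finset.mem_Ioo, Finset.mem_insert]; omega
    rw [this, Finset.sum_insert (by simp), mul_add, add_comm]
    congr 1
    rw [← mul_assoc, ← zpow_add₀ (hx _ hm0)]
    congr 2
    push_cast; ring

theorem addHead_false (c : ℕ) (w : List Bool) :
    addHead c (fromWord (false :: w)) = addHead (c + 1) (fromWord w) := by
  cases h : fromWord w with
  | nil => exact absurd h (fromWord_ne w)
  | cons a t => simp [fromWord, h, addHead]; omega

theorem sum_F_list (x : ℕ → ℂ) (a N : ℕ) (L : List (List Bool)) :
    (L.map fun v => F x 0 (a :: fromWord v) (N + 1)).sum =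
      ∑ m ∈ Finset.Ioo 0 (N + 1), x m ^ (-(a : ℤ)) * (L.map fun v => F x 0 (fromWord v) m).sum := by
  induction L with
  | nil => simp
  | cons v L ih =>
    simp only [List.map_cons, List.sum_cons, ih, mul_add, Finset.sum_add_distrib]
    congr 1

theorem addHead_zero (l : List ℕ) : addHead 0 l = l := by cases l <;> rfl

theorem finite_identity (x : ℕ → ℂ) (hx : ∀ m, 0 < m → x m ≠ 0) (w : List Bool) :
    ∀ c N, ((down w).map fun v => F x 0 (addHead c (fromWord v)) (N + 1)).sum =
      F x 1 (addHead c (fromWord w)) N := by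
  induction w with
  | nil => intro c N; simp [down, fromWord, addHead, F]
  | cons b w ih =>
    intro c N
    cases b
    · simp only [down, List.map_map, Function.comp_def, addHead_false]
      exact ih _ _
    · simp only [down, List.map_append, List.map_map, Function.comp_def, addHead_false,
        List.sum_append, ih]
      simp only [fromWord, addHead]
      rw [star_split x hx _ _ (fromWord_ne w), sum_F_list, add_comm 1 c]
      congr 1
      refine Finset.sum_congr rfl fun m hm => ?_
      have hm0 : 0 < m := (Finset.mem_Ioo.1 hm).1
      have := ih 0 (m - 1)
      simp only [addHead_zero] at this
      rw [Nat.sub_add_cancel hm0] at this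
      rw [this]

/-! ### Truncated sums as sums over index functions -/

def Chain (e : ℕ) {r : ℕ} (n : Fin r → ℕ) : Prop := ∀ i j, i < j → n j < n i + e

open Classical in
noncomputable def J (e r N : ℕ) : Finset (Fin r → ℕ) :=
  (Fintype.piFinset fun _ => Finset.Ioo 0 (N + e)).filter (Chain e)

theorem mem_J {e r N : ℕ} {n : Fin r → ℕ} :
    n ∈ J e r N ↔ (∀ i, 0 < n i ∧ n i < N + e) ∧ Chain e n := by
  simp [J]

theorem F_eq (x : ℕ → ℂ) (e : ℕ) (he : e ≤ 1) (k : List ℕ) : ∀ N,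
    F x e k N = ∑ n ∈ J e k.length N, ∏ i, x (n i) ^ (-(k.get i : ℤ)) := by
  induction k with
  | nil =>
    intro N
    have : J e 0 N = {fun i => i.elim0} := by
      ext n
      simp only [mem_J, Finset.mem_singleton]
      exact ⟨fun _ => Subsingleton.elim _ _, fun _ => ⟨fun i => i.elim0, fun i => i.elim0⟩⟩
    simp [F, this]
  | cons a t ih =>
    intro N
    simp only [F, ih, Finset.mul_sum]
    rw [Finset.sum_sigma']
    refine Finset.sum_bij' (fun p _ => (Fin.cons p.1 p.2 : Fin (t.length + 1) → ℕ))
      (fun n _ => ⟨n 0, fun i => n i.succ⟩) ?_ ?_ ?_ ?_ ?_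
    · rintro ⟨m, n⟩ h
      simp only [Finset.mem_sigma, Finset.mem_Ioo, mem_J] at h
      obtain ⟨⟨h1, h2⟩, h3, h4⟩ := h
      refine mem_J.2 ⟨?_, ?_⟩
      · intro i
        refine Fin.cases ?_ (fun i => ?_) i
        · simpa using ⟨h1, h2⟩
        · have := h3 i
          simp only [Fin.cons_succ]
          omega
      · intro i j
        refine Fin.cases ?_ (fun i => ?_) i
        · refine Fin.cases (fun h => absurd h (lt_irrefl _)) (fun j _ => ?_) j
          simpa using (h3 j).2
        · refine Fin.cases (fun h => absurd h (by simp)) (fun j hij => ?_) j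
          simpa using h4 i j (by simpa using hij)
    · intro n h
      obtain ⟨h1, h2⟩ := mem_J.1 h
      simp only [Finset.mem_sigma, Finset.mem_Ioo, mem_J]
      refine ⟨h1 0, fun i => ⟨(h1 i.succ).1, h2 0 i.succ (Fin.succ_pos i)⟩, ?_⟩
      intro i j hij
      exact h2 i.succ j.succ (by simpa using hij)
    · rintro ⟨m, n⟩ _
      simp
    · intro n _
      exact Fin.cons_self_tail n
    · rintro ⟨m, n⟩ _
      simp [Fin.prod_univ_succ, mul_comm]

/-! ### Summability -/

theorem exists_bound (x : ℕ → ℂ) (hx : ∀ m, 0 < m → x m ≠ 0) (β : ℂ) (hβ : ∀ m, x m = m + β) :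
    ∃ C : ℝ, 1 ≤ C ∧ ∀ m : ℕ, 0 < m → (m : ℝ) ≤ C * ‖x m‖ := by
  obtain ⟨M, hM⟩ := exists_nat_ge (2 * ‖β‖)
  have hs : 0 ≤ ∑ m ∈ Finset.range M, (m : ℝ) / ‖x m‖ :=
    Finset.sum_nonneg fun _ _ => by positivity
  refine ⟨2 + ∑ m ∈ Finset.range M, (m : ℝ) / ‖x m‖, by linarith, fun m hm => ?_⟩
  have hpos : 0 < ‖x m‖ := norm_pos_iff.2 (hx m hm)
  by_cases h : m < M
  · have := Finset.single_le_sum (f := fun m : ℕ => (m : ℝ) / ‖x m‖) (s := Finset.range M)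
      (fun _ _ => by positivity) (Finset.mem_range.2 h)
    rw [← div_le_iff₀ hpos]
    linarith
  · have h1 : (M : ℝ) ≤ m := by exact_mod_cast not_lt.1 h
    have h2 : (m : ℝ) ≤ ‖x m‖ + ‖β‖ := by
      have : (m : ℂ) = x m - β := by rw [hβ]; ring
      calc (m : ℝ) = ‖(m : ℂ)‖ := by simp
        _ = ‖x m - β‖ := by rw [← this]
        _ ≤ _ := norm_sub_le _ _
    nlinarith

theorem summable_pi (g : ℕ → ℝ) (hg : ∀ n, 0 ≤ g n) (hs : Summable g) (r : ℕ) :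
    Summable fun n : Fin r → ℕ => ∏ i, g (n i) := by
  induction r with
  | zero => exact Summable.of_finite
  | succ r ih =>
    rw [← (Fin.consEquiv fun _ => ℕ).summable_iff]
    have := Summable.mul_of_nonneg hs ih hg (fun n => Finset.prod_nonneg fun i _ => hg _)
    refine this.congr fun p => ?_
    simp [Fin.prod_univ_succ, Fin.consEquiv]

theorem term_bound (x : ℕ → ℂ) (hx : ∀ m, 0 < m → x m ≠ 0) (C : ℝ) (hC : 1 ≤ C)
    (hb : ∀ m : ℕ, 0 < m → (m : ℝ) ≤ C * ‖x m‖) (a : ℕ) (m : ℕ) (hm : 0 < m) :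
    ‖x m ^ (-(a : ℤ))‖ ≤ C ^ a * ((m : ℝ)⁻¹) ^ a := by
  have hpos : 0 < ‖x m‖ := norm_pos_iff.2 (hx m hm)
  have hm' : (0 : ℝ) < m := by exact_mod_cast hm
  rw [zpow_neg, zpow_natCast, norm_inv, norm_pow, ← mul_pow, ← inv_pow]
  refine pow_le_pow_left₀ (by positivity) ?_ a
  rw [inv_le_comm₀ hpos (by positivity), mul_inv, inv_inv, inv_mul_le_iff₀ (by positivity)]
  exact hb m hm

theorem summable_chain (x : ℕ → ℂ) (hx : ∀ m, 0 < m → x m ≠ 0) (β : ℂ)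
    (hβ : ∀ m, x m = m + β) (e : ℕ) (he : e ≤ 1) (a : ℕ) (ha : 2 ≤ a) (t : List ℕ)
    (ht : ∀ b ∈ t, 0 < b) :
    Summable fun n : {n : Fin (a :: t).length → ℕ // Chain e n ∧ ∀ i, 0 < n i} =>
      ∏ i, x (n.1 i) ^ (-((a :: t).get i : ℤ)) := by
  obtain ⟨C, hC, hb⟩ := exists_bound x hx β hβ
  set r := (a :: t).length with hr
  have hr0 : 0 < (r : ℝ) := by rw [hr]; simp; positivity
  set s : ℝ := 1 / r with hs
  have hs0 : 0 < s := by positivity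
  have hsum : Summable fun n : ℕ => (n : ℝ) ^ (-(1 + s)) := by
    rw [Real.summable_nat_rpow]; linarith
  have h1 := (summable_pi _ (fun n => by positivity) hsum r).mul_left
    (∏ i, C ^ (a :: t).get i)
  refine Summable.of_norm_bounded (h1.comp_injective Subtype.val_injective) ?_
  rintro ⟨n, hn, hpos⟩
  simp only [Function.comp]
  rw [norm_prod]
  have hposR : ∀ i, (0 : ℝ) < n i := fun i => by exact_mod_cast hpos i
  refine (Finset.prod_le_prod (fun _ _ => norm_nonneg _) (fun i _ =>
    term_bound x hx C hC hb ((a :: t).get i) (n i) (hpos i))).trans ?_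
  rw [Finset.prod_mul_distrib]
  refine mul_le_mul_of_nonneg_left ?_ (Finset.prod_nonneg fun _ _ => by positivity)
  have hle1 : ∀ i, ((n i : ℝ))⁻¹ ≤ 1 := fun i =>
    inv_le_one_of_one_le₀ (by exact_mod_cast hpos i)
  have hn0 : ∀ i, (n i : ℝ) ≤ n ⟨0, by simp [hr]⟩ := by
    intro i
    by_cases h : i = ⟨0, by simp [hr]⟩
    · rw [h]
    · have h0 : (⟨0, by simp [hr]⟩ : Fin r) < i := by
        rw [Fin.lt_def]
        rcases Nat.eq_zero_or_pos i.1 with h' | h'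
        · exact absurd (Fin.ext h') h
        · exact h'
      have := hn _ _ h0
      exact_mod_cast (by omega : n i ≤ n ⟨0, by simp [hr]⟩)
  have key1 : ∏ i, ((n i : ℝ)⁻¹) ^ (a :: t).get i ≤
      ((n ⟨0, by simp [hr]⟩ : ℝ))⁻¹ * ∏ i, (n i : ℝ)⁻¹ := by
    change ∏ i : Fin (t.length + 1), ((n i : ℝ)⁻¹) ^ (a :: t).get i ≤
      ((n (0 : Fin (t.length + 1)) : ℝ))⁻¹ * ∏ i : Fin (t.length + 1), (n i : ℝ)⁻¹
    rw [Fin.prod_univ_succ, Fin.prod_univ_succ, ← mul_assoc]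
    refine mul_le_mul ?_ (Finset.prod_le_prod (fun _ _ => by positivity) fun i _ => ?_)
      (Finset.prod_nonneg fun _ _ => by positivity) (by positivity)
    · rw [← sq]
      exact pow_le_pow_of_le_one (by positivity) (hle1 _) ha
    · refine pow_le_of_le_one (by positivity) (hle1 _) ?_
      have := ht (t.get i) (List.get_mem _ _)
      exact this.ne'
  refine key1.trans ?_
  have key2 : ((n ⟨0, by simp [hr]⟩ : ℝ))⁻¹ ≤ ∏ i, (n i : ℝ) ^ (-s) := by
    calc ((n ⟨0, by simp [hr]⟩ : ℝ))⁻¹ = ∏ i : Fin r, (n ⟨0, by simp [hr]⟩ : ℝ) ^ (-s) := by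
          rw [Finset.prod_const, Finset.card_univ, Fintype.card_fin, ← Real.rpow_natCast,
            ← Real.rpow_mul (hposR _).le, hs]
          rw [show -(1 / (r : ℝ)) * r = -1 by field_simp, Real.rpow_neg_one]
      _ ≤ _ := Finset.prod_le_prod (fun _ _ => by positivity) fun i _ =>
          Real.rpow_le_rpow_of_nonpos (hposR i) (hn0 i) (by linarith)
  calc _ ≤ (∏ i, (n i : ℝ) ^ (-s)) * ∏ i, (n i : ℝ)⁻¹ :=
        mul_le_mul_of_nonneg_right key2 (Finset.prod_nonneg fun _ _ => by positivity)
    _ = _ := by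
        rw [← Finset.prod_mul_distrib]
        refine Finset.prod_congr rfl fun i _ => ?_
        rw [← Real.rpow_neg_one, ← Real.rpow_add (hposR i)]
        congr 1; ring

theorem tendsto_F (x : ℕ → ℂ) (hx : ∀ m, 0 < m → x m ≠ 0) (β : ℂ)
    (hβ : ∀ m, x m = m + β) (e : ℕ) (he : e ≤ 1) (a : ℕ) (ha : 2 ≤ a) (t : List ℕ)
    (ht : ∀ b ∈ t, 0 < b) :
    Filter.Tendsto (fun N => F x e (a :: t) N) Filter.atTop
      (nhds (∑' n : {n : Fin (a :: t).length → ℕ // Chain e n ∧ ∀ i, 0 < n i},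
        ∏ i, x (n.1 i) ^ (-((a :: t).get i : ℤ)))) := by
  classical
  have hs := (summable_chain x hx β hβ e he a ha t ht).hasSum
  have hT : Filter.Tendsto (fun N => (J e (a :: t).length N).subtype
      (fun n => Chain e n ∧ ∀ i, 0 < n i)) Filter.atTop Filter.atTop := by
    refine Filter.tendsto_atTop_finset_of_monotone ?_ ?_
    · intro N M hNM n hn
      simp only [Finset.mem_subtype, mem_J] at hn ⊢
      exact ⟨fun i => ⟨(hn.1 i).1, by have := (hn.1 i).2; omega⟩, hn.2⟩
    · rintro ⟨n, hn, hp⟩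
      refine ⟨(∑ i, n i) + 1, ?_⟩
      simp only [Finset.mem_subtype, mem_J]
      refine ⟨fun i => ⟨hp i, ?_⟩, hn⟩
      have := Finset.single_le_sum (f := n) (fun _ _ => Nat.zero_le _) (Finset.mem_univ i)
      omega
  refine (Filter.Tendsto.comp hs hT).congr fun N => ?_
  rw [F_eq x e he]
  simp only [Function.comp]
  rw [Finset.sum_subtype_of_mem (f := fun n : Fin (a :: t).length → ℕ =>
    ∏ i, x (n i) ^ (-((a :: t).get i : ℤ)))]
  intro n hn
  obtain ⟨h1, h2⟩ := mem_J.1 hn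
  exact ⟨h2, fun i => (h1 i).1⟩

theorem tendsto_HMZV (β : ℂ) (hx : ∀ m : ℕ, 0 < m → (m : ℂ) + β - 1 ≠ 0)
    (a : ℕ) (ha : 2 ≤ a) (t : List ℕ) (ht : ∀ b ∈ t, 0 < b) :
    Filter.Tendsto (fun N => F (fun m : ℕ => (m : ℂ) + β - 1) 0 (a :: t) N) Filter.atTop
      (nhds (HMZV (a :: t) β)) := by
  have := tendsto_F (fun m : ℕ => (m : ℂ) + β - 1) hx (β - 1) (fun m => by ring) 0 (by omega)
    a ha t ht
  have hp : ∀ n : Fin (a :: t).length → ℕ, (Chain 0 n ∧ ∀ i, 0 < n i) ↔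
      (StrictAnti n ∧ ∀ i, 0 < n i) := fun n => by
    refine and_congr_left fun _ => ⟨fun h i j hij => by simpa using h i j hij,
      fun h i j hij => by simpa using h hij⟩
  unfold HMZV
  rw [← (Equiv.subtypeEquivRight hp).tsum_eq]
  exact this

theorem tendsto_HMZSV (β : ℂ) (hx : ∀ m : ℕ, 0 < m → (m : ℂ) + β - 1 ≠ 0)
    (a : ℕ) (ha : 2 ≤ a) (t : List ℕ) (ht : ∀ b ∈ t, 0 < b) :
    Filter.Tendsto (fun N => F (fun m : ℕ => (m : ℂ) + β - 1) 1 (a :: t) N) Filter.atTop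
      (nhds (HMZSV (a :: t) β)) := by
  have := tendsto_F (fun m : ℕ => (m : ℂ) + β - 1) hx (β - 1) (fun m => by ring) 1 (by omega)
    a ha t ht
  have hp : ∀ n : Fin (a :: t).length → ℕ, (Chain 1 n ∧ ∀ i, 0 < n i) ↔
      (Antitone n ∧ ∀ i, 0 < n i) := fun n => by
    refine and_congr_left fun _ => ⟨fun h i j hij => ?_, fun h i j hij => ?_⟩
    · rcases hij.lt_or_eq with h' | rfl
      · exact Nat.lt_succ_iff.1 (h i j h')
      · exact le_rfl
    · exact Nat.lt_succ_iff.2 (h hij.le)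
  unfold HMZSV
  rw [← (Equiv.subtypeEquivRight hp).tsum_eq]
  exact this

theorem plusOne_eq (l : List ℕ) : plusOne l = addHead 1 l := by cases l <;> rfl

theorem plusOne_fromWord (w : List Bool) :
    ∃ a t, plusOne (fromWord w) = a :: t ∧ 2 ≤ a ∧ ∀ b ∈ t, 0 < b := by
  have hp := fromWord_pos w
  cases h : fromWord w with
  | nil => exact absurd h (fromWord_ne w)
  | cons a t =>
    rw [h] at hp
    exact ⟨a + 1, t, rfl, by have := hp a (by simp); omega, fun b hb => hp b (by simp [hb])⟩

theorem tendsto_list (β : ℂ) (hx : ∀ m : ℕ, 0 < m → (m : ℂ) + β - 1 ≠ 0) (L : List (List Bool)) :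
    Filter.Tendsto (fun N => (L.map fun v =>
      F (fun m : ℕ => (m : ℂ) + β - 1) 0 (plusOne (fromWord v)) (N + 1)).sum) Filter.atTop
      (nhds (L.map fun v => HMZV (plusOne (fromWord v)) β).sum) := by
  induction L with
  | nil => simp
  | cons v L ih =>
    simp only [List.map_cons, List.sum_cons]
    refine Filter.Tendsto.add ?_ ih
    obtain ⟨a, t, h, ha, ht⟩ := plusOne_fromWord v
    rw [h]
    exact (tendsto_HMZV β hx a ha t ht).comp (Filter.tendsto_add_atTop_nat 1)

end S13

theorem stmt13 (k : List ℕ) (hk : k ≠ []) (hkpos : ∀ a ∈ k, 0 < a)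
    (α : ℂ) (hα : ∀ j : ℕ, 0 < j → α ≠ (j : ℂ)) :
    (∑' l : {l : List ℕ // (∀ a ∈ l, 0 < a) ∧ Refines l k},
        HMZV (plusOne (HDual l.1.reverse)) (1 - α)) =
      HMZSV (plusOne (HDual k.reverse)) (1 - α) := by
  have hx : ∀ m : ℕ, 0 < m → (m : ℂ) + (1 - α) - 1 ≠ 0 := fun m hm h => by
    apply hα m hm
    linear_combination -h
  rw [S13.tsum_words k hk hkpos (fun l => HMZV (plusOne l) (1 - α))]
  refine tendsto_nhds_unique (S13.tendsto_list (1 - α) hx _) ?_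
  simp only [S13.plusOne_eq]
  simp only [S13.finite_identity _ hx]
  simp only [← S13.plusOne_eq]
  unfold HDual
  obtain ⟨a, t, h, ha, ht⟩ := S13.plusOne_fromWord ((toWord k.reverse).map fun b => !b)
  rw [h]
  exact S13.tendsto_HMZSV (1 - α) hx a ha t ht
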